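/- Let 𝔥 be a semisimple Lie algebra which is an ideal of codimension 1 in a Lie algebra 𝔤 of dimension 2n. Then 𝔤 admits no symplectic form. (Key steps: every derivation of 𝔥 is inner and H¹(𝔥;ℝ) = 0, forcing any closed extension data to degenerate.) -/

import Mathlib

/-!
Derivations of the semisimple ideal `H` are inner, so a closed 2-form `ω` satisfies
`ω(x, y) = κ(a, ⁅x, y⁆)` on `H` for some `a ∈ H`, where `κ` is the Killing form. Since `H` is
perfect, the identity persists for `x ∈ H` and `y` in the whole Lie algebra. A nonzero `t ∈ H`
commuting with `a` then lies in the kernel of `ω`, because `κ(a, ⁅t, y⁆) = κ(⁅a, t⁆, y) = 0`, and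
hence in the kernel of `ω ^ n`; a top-degree form with nonzero kernel vanishes.
-/

open scoped TensorProduct

variable {V : Type*} [AddCommGroup V] [Module ℝ V]

noncomputable def wedgeF {k l : ℕ} (f : V [⋀^Fin k]→ₗ[ℝ] ℝ) (g : V [⋀^Fin l]→ₗ[ℝ] ℝ) :
    V [⋀^Fin (k + l)]→ₗ[ℝ] ℝ :=
  ((TensorProduct.lid ℝ ℝ).toLinearMap.compAlternatingMap (f.domCoprod g)).domDomCongr
    finSumFinEquiv

noncomputable def wpowF (ω : V [⋀^Fin 2]→ₗ[ℝ] ℝ) : (n : ℕ) → V [⋀^Fin (2 * n)]→ₗ[ℝ] ℝ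
  | 0 => AlternatingMap.constOfIsEmpty ℝ V (Fin 0) 1
  | n + 1 => wedgeF (wpowF ω n) ω

noncomputable def oneAlt (α : Module.Dual ℝ V) : V [⋀^Fin 1]→ₗ[ℝ] ℝ :=
  AlternatingMap.ofSubsingleton ℝ V ℝ 0 α

noncomputable def bilinToAlt (B : V →ₗ[ℝ] V →ₗ[ℝ] ℝ) (hB : ∀ x, B x x = 0) :
    V [⋀^Fin 2]→ₗ[ℝ] ℝ where
  toFun v := B (v 0) (v 1)
  map_update_add' := by
    intro _ v i x y
    fin_cases i <;> simp
  map_update_smul' := by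
    intro _ v i c x
    fin_cases i <;> simp
  map_eq_zero_of_eq' := by
    intro v i j hij hne
    have h01 : v 0 = v 1 := by
      fin_cases i <;> fin_cases j <;> simp_all
    show B (v 0) (v 1) = 0
    rw [h01]; exact hB _

variable {L : Type*} [LieRing L] [LieAlgebra ℝ L]

noncomputable def ceD (α : Module.Dual ℝ L) : L [⋀^Fin 2]→ₗ[ℝ] ℝ :=
  bilinToAlt
    (LinearMap.mk₂ ℝ (fun x y => -α ⁅x, y⁆)
      (fun x x' y => by simp [add_lie]; exact add_comm _ _)
      (fun c x y => by simp [smul_lie])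
      (fun x y y' => by simp [lie_add]; exact add_comm _ _)
      (fun c x y => by simp [lie_smul]))
    (fun x => by simp)

/-- closedness of a 2-cochain under the Chevalley–Eilenberg differential -/
def IsCEClosed (ω : L [⋀^Fin 2]→ₗ[ℝ] ℝ) : Prop :=
  ∀ x y z : L, ω ![⁅x, y⁆, z] - ω ![⁅x, z⁆, y] + ω ![⁅y, z⁆, x] = 0

section AlternatingForm

variable {R M N N' ι κ : Type*} [CommRing R] [AddCommGroup M] [Module R M]
  [AddCommGroup N] [Module R N] [AddCommGroup N'] [Module R N']

/-- The vector `t` lies in the kernel of the alternating map `f`, that is, the contraction of `f`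
with `t` vanishes. All slots are tested at once, so that the index type needs no distinguished
element; for an empty index type the condition is vacuous. -/
def Annihilates (t : M) (f : M [⋀^ι]→ₗ[R] N) : Prop :=
  ∀ (v : ι → M) (i : ι), v i = t → f v = 0

namespace Annihilates

theorem domCoprod [Fintype ι] [Fintype κ] [DecidableEq ι] [DecidableEq κ] {t : M}
    {f : M [⋀^ι]→ₗ[R] N} {g : M [⋀^κ]→ₗ[R] N'} (hf : Annihilates t f) (hg : Annihilates t g) :
    Annihilates t (f.domCoprod g) := by
  intro v i hi
  rw [AlternatingMap.domCoprod_apply, sum_apply]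
  refine Finset.sum_eq_zero fun σ _ => ?_
  induction σ using Quotient.inductionOn' with | _ σ
  have hσ : v (σ (σ.symm i)) = t := by rwa [σ.apply_symm_apply]
  rw [AlternatingMap.domCoprod.summand_mk'', smul_apply, MultilinearMap.domDomCongr_apply,
    MultilinearMap.domCoprod_apply]
  rcases hj : σ.symm i with j | j <;> rw [hj] at hσ
  · have hfv : f (fun k => v (σ (Sum.inl k))) = 0 := hf _ j hσ
    simp [hfv]
  · have hgv : g (fun k => v (σ (Sum.inr k))) = 0 := hg _ j hσ
    simp [hgv]

theorem eq_zero_of_finrank_eq_card {K E F : Type*} [Field K] [AddCommGroup E] [Module K E]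
    [FiniteDimensional K E] [AddCommGroup F] [Module K F] [Fintype ι]
    (hι : Module.finrank K E = Fintype.card ι) {t : E} (ht : t ≠ 0) {f : E [⋀^ι]→ₗ[K] F}
    (hf : Annihilates t f) : f = 0 := by
  let b := Module.Basis.extend (LinearIndepOn.singleton (R := K) (v := id) ht)
  have := FiniteDimensional.fintypeBasisIndex b
  refine b.ext_alternating fun v hv => ?_
  have hv_surj : Function.Surjective v :=
    (hv.bijective_of_nat_card_le (by simp [← hι, Module.finrank_eq_card_basis b])).surjective
  obtain ⟨i, hi⟩ := hv_surj ⟨t, Module.Basis.subset_extend _ rfl⟩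
  exact hf _ i (by simp [hi, b])

theorem wedgeF {k l : ℕ} {t : V} {f : V [⋀^Fin k]→ₗ[ℝ] ℝ} {g : V [⋀^Fin l]→ₗ[ℝ] ℝ}
    (hf : Annihilates t f) (hg : Annihilates t g) : Annihilates t (wedgeF f g) := by
  intro v i hi
  have h := hf.domCoprod hg (v ∘ finSumFinEquiv) (finSumFinEquiv.symm i) (by simpa using hi)
  change TensorProduct.lid ℝ ℝ (f.domCoprod g (v ∘ finSumFinEquiv)) = 0
  rw [h, map_zero]

theorem wpowF {t : V} {ω : V [⋀^Fin 2]→ₗ[ℝ] ℝ} (h : Annihilates t ω) (n : ℕ) :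
    Annihilates t (wpowF ω n) := by
  induction n with
  | zero => exact fun _ i => i.elim0
  | succ n ih => exact ih.wedgeF h

end Annihilates

/-- The bilinear form `(x, y) ↦ ω(x, y)` underlying an alternating form `ω` of degree two, the
inverse construction to `bilinToAlt`. -/
def bilinOfAlt (ω : M [⋀^Fin 2]→ₗ[R] R) : LinearMap.BilinForm R M :=
  LinearMap.mk₂ R (fun x y => ω ![x, y])
    (fun x x' y => ω.map_vecCons_add ![y] x x')
    (fun c x y => ω.map_vecCons_smul ![y] c x)
    (fun x y y' => (ω.curryLeft x).map_vecCons_add ![] y y')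
    (fun c x y => (ω.curryLeft x).map_vecCons_smul ![] c y)

@[simp]
theorem bilinOfAlt_apply (ω : M [⋀^Fin 2]→ₗ[R] R) (x y : M) : bilinOfAlt ω x y = ω ![x, y] :=
  rfl

theorem isAlt_bilinOfAlt (ω : M [⋀^Fin 2]→ₗ[R] R) : (bilinOfAlt ω).IsAlt :=
  fun _ => ω.map_eq_zero_of_eq _ (i := 0) (j := 1) rfl (by decide)

theorem annihilates_of_bilinOfAlt_eq_zero {t : M} {ω : M [⋀^Fin 2]→ₗ[R] R}
    (ht : bilinOfAlt ω t = 0) : Annihilates t ω := by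
  intro v i hi
  have hv : ω v = bilinOfAlt ω (v 0) (v 1) := by
    rw [bilinOfAlt_apply]
    congr 1
    ext j
    fin_cases j <;> rfl
  rw [hv]
  fin_cases i
  · rw [show v 0 = t from hi, ht, LinearMap.zero_apply]
  · rw [show v 1 = t from hi, ← (isAlt_bilinOfAlt ω).neg_eq, ht, LinearMap.zero_apply, neg_zero]

end AlternatingForm

theorem exists_ne_zero_lie_eq_zero {𝔤 : Type*} [LieRing 𝔤] [Nontrivial 𝔤] (a : 𝔤) :
    ∃ t : 𝔤, t ≠ 0 ∧ ⁅a, t⁆ = 0 := by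
  by_cases ha : a = 0
  · obtain ⟨t, ht⟩ := exists_ne (0 : 𝔤)
    exact ⟨t, ht, by rw [ha, zero_lie]⟩
  · exact ⟨a, ha, lie_self a⟩

section TwoCocycle

variable {R 𝔤 𝔥 : Type*} [CommRing R] [LieRing 𝔤] [LieAlgebra R 𝔤] [LieRing 𝔥] [LieAlgebra R 𝔥]

/-- A bilinear form that is a Chevalley–Eilenberg 2-cocycle with trivial coefficients: the
counterpart of `LieModule.Cohomology.twoCocycle` that does not require a trivial module structure
on the scalars as an instance. -/
structure IsTwoCocycle (B : LinearMap.BilinForm R 𝔤) : Prop where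
  isAlt : B.IsAlt
  closed (x y z : 𝔤) : B ⁅x, y⁆ z - B ⁅x, z⁆ y + B ⁅y, z⁆ x = 0

theorem IsCEClosed.isTwoCocycle {ω : L [⋀^Fin 2]→ₗ[ℝ] ℝ} (hω : IsCEClosed ω) :
    IsTwoCocycle (bilinOfAlt ω) :=
  ⟨isAlt_bilinOfAlt ω, hω⟩

namespace IsTwoCocycle

theorem apply_lie {B : LinearMap.BilinForm R 𝔤} (hB : IsTwoCocycle B) (x y z : 𝔤) :
    B ⁅x, y⁆ z = B ⁅x, z⁆ y - B ⁅y, z⁆ x := by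
  linear_combination hB.closed x y z

theorem compl₁₂ {B : LinearMap.BilinForm R 𝔤} (hB : IsTwoCocycle B) (f : 𝔥 →ₗ⁅R⁆ 𝔤) :
    IsTwoCocycle (B.compl₁₂ (f : 𝔥 →ₗ[R] 𝔤) f) where
  isAlt x := hB.isAlt (f x)
  closed x y z := by simpa using hB.closed (f x) (f y) (f z)

end IsTwoCocycle

end TwoCocycle

section IsKilling

open LieAlgebra LieModule

variable {K 𝔤 : Type*} [Field K] [LieRing 𝔤] [LieAlgebra K 𝔤]

section

variable [FiniteDimensional K 𝔤] [IsKilling K 𝔤]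

theorem dual_eq_zero_of_forall_apply_lie_eq_zero {α : Module.Dual K 𝔤}
    (hα : ∀ x y : 𝔤, α ⁅x, y⁆ = 0) : α = 0 := by
  have hκ := IsKilling.killingForm_nondegenerate K 𝔤
  obtain ⟨a, rfl⟩ := (LinearMap.BilinForm.toDual _ hκ).surjective α
  have ha_central : LieDerivation.ad K 𝔤 a = 0 := by
    ext x
    refine hκ.1 _ fun y => ?_
    rw [LieDerivation.ad_apply_apply, traceForm_apply_lie_apply]
    exact hα x y
  rw [(LieDerivation.IsKilling.ad_apply_eq_zero_iff K 𝔤 a).mp ha_central, map_zero]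

theorem IsTwoCocycle.exists_lieDerivation_killingForm_eq {B : LinearMap.BilinForm K 𝔤}
    (hB : IsTwoCocycle B) :
    ∃ D : LieDerivation K 𝔤 𝔤, ∀ x y, B x y = killingForm K 𝔤 (D x) y := by
  have hκ := IsKilling.killingForm_nondegenerate K 𝔤
  let D : 𝔤 →ₗ[K] 𝔤 := (LinearMap.BilinForm.toDual _ hκ).symm ∘ₗ B
  have hD (x y : 𝔤) : killingForm K 𝔤 (D x) y = B x y :=
    LinearMap.BilinForm.apply_toDual_symm_apply (hB := hκ) (B x) y
  have hD_leibniz (x y : 𝔤) : D ⁅x, y⁆ = ⁅x, D y⁆ - ⁅y, D x⁆ := by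
    refine sub_eq_zero.mp (hκ.1 _ fun z => ?_)
    simp only [map_sub, LinearMap.sub_apply, traceForm_apply_lie_apply', hD]
    rw [hB.apply_lie x y z, ← hB.isAlt.neg_eq y, ← hB.isAlt.neg_eq x, sub_self]
  exact ⟨⟨D, hD_leibniz⟩, fun x y => (hD x y).symm⟩

theorem IsTwoCocycle.exists_eq_killingForm_lie {B : LinearMap.BilinForm K 𝔤}
    (hB : IsTwoCocycle B) : ∃ a, ∀ x y, B x y = killingForm K 𝔤 a ⁅x, y⁆ := by
  obtain ⟨D, hD⟩ := hB.exists_lieDerivation_killingForm_eq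
  obtain ⟨a, rfl⟩ := LieDerivation.IsKilling.exists_eq_ad D
  exact ⟨a, fun x y => by rw [hD, LieDerivation.ad_apply_apply, traceForm_apply_lie_apply]⟩

end

section LieIdeal

variable (I : LieIdeal K 𝔤) [IsKilling K I]

theorem IsTwoCocycle.eq_apply_lie_of_mem [FiniteDimensional K I] {B : LinearMap.BilinForm K 𝔤}
    (hB : IsTwoCocycle B) {α : Module.Dual K 𝔤} (hα : ∀ x ∈ I, ∀ y ∈ I, B x y = α ⁅x, y⁆)
    (x : I) (y : 𝔤) : B x y = α ⁅(x : 𝔤), y⁆ := by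
  let β : Module.Dual K I := (B.flip y + α ∘ₗ (ad K 𝔤 y : 𝔤 →ₗ[K] 𝔤)) ∘ₗ I.toSubmodule.subtype
  have hβ (x : I) : β x = B x y - α ⁅(x : 𝔤), y⁆ := by
    rw [← lie_skew, map_neg, sub_neg_eq_add]
    rfl
  have hβ_lie (u v : I) : β ⁅u, v⁆ = 0 := by
    have hu : ⁅(u : 𝔤), y⁆ ∈ I := lie_mem_left K 𝔤 I u y u.2
    have hv : ⁅(v : 𝔤), y⁆ ∈ I := lie_mem_left K 𝔤 I v y v.2
    have jacobi : ⁅⁅(u : 𝔤), (v : 𝔤)⁆, y⁆ = ⁅⁅(u : 𝔤), y⁆, (v : 𝔤)⁆ - ⁅⁅(v : 𝔤), y⁆, (u : 𝔤)⁆ := by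
      rw [lie_lie, ← lie_skew (u : 𝔤) ⁅(v : 𝔤), y⁆, ← lie_skew (v : 𝔤) ⁅(u : 𝔤), y⁆]
      abel
    rw [hβ, LieIdeal.coe_bracket_of_module, LieSubmodule.coe_bracket, hB.apply_lie,
      hα _ hu _ v.2, hα _ hv _ u.2, jacobi, map_sub, sub_self]
  rw [← sub_eq_zero, ← hβ, dual_eq_zero_of_forall_apply_lie_eq_zero hβ_lie, LinearMap.zero_apply]

variable [FiniteDimensional K 𝔤]

theorem IsTwoCocycle.exists_eq_killingForm_lie_of_mem {B : LinearMap.BilinForm K 𝔤}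
    (hB : IsTwoCocycle B) : ∃ a : I, ∀ (x : I) (y : 𝔤), B x y = killingForm K 𝔤 a ⁅(x : 𝔤), y⁆ := by
  obtain ⟨a, ha⟩ := (hB.compl₁₂ I.incl).exists_eq_killingForm_lie
  refine ⟨a, hB.eq_apply_lie_of_mem I fun x hx y hy => ?_⟩
  rw [I.killingForm_eq] at ha
  exact ha ⟨x, hx⟩ ⟨y, hy⟩

theorem IsTwoCocycle.exists_ne_zero_apply_eq_zero [Nontrivial I] {B : LinearMap.BilinForm K 𝔤}
    (hB : IsTwoCocycle B) : ∃ t : 𝔤, t ≠ 0 ∧ B t = 0 := by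
  obtain ⟨a, ha⟩ := hB.exists_eq_killingForm_lie_of_mem I
  obtain ⟨t, ht, hat⟩ := exists_ne_zero_lie_eq_zero a
  refine ⟨t, by simpa using ht, LinearMap.ext fun y => ?_⟩
  have hat' : ⁅(a : 𝔤), (t : 𝔤)⁆ = 0 := congrArg Subtype.val hat
  rw [ha, ← traceForm_apply_lie_apply, hat', map_zero]

end LieIdeal

end IsKilling

theorem stmt6_general [FiniteDimensional ℝ L] (n : ℕ) (hdim : Module.finrank ℝ L = 2 * n)
    (H : LieIdeal ℝ L) [LieAlgebra.IsSemisimple ℝ H] [Nontrivial H] :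
    ¬ ∃ ω : L [⋀^Fin 2]→ₗ[ℝ] ℝ, IsCEClosed ω ∧ wpowF ω n ≠ 0 := by
  rintro ⟨ω, hclosed, hω⟩
  obtain ⟨t, ht, hωt⟩ := hclosed.isTwoCocycle.exists_ne_zero_apply_eq_zero H
  have htω : Annihilates t (wpowF ω n) := (annihilates_of_bilinOfAlt_eq_zero hωt).wpowF n
  exact hω (htω.eq_zero_of_finrank_eq_card (by rw [hdim, Fintype.card_fin]) ht)

/-- a Lie algebra with a semisimple ideal of codimension 1 has no
symplectic form. -/
theorem stmt6 [FiniteDimensional ℝ L] (n : ℕ) (hn : 0 < n)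
    (hdim : Module.finrank ℝ L = 2 * n) (H : LieIdeal ℝ L)
    [LieAlgebra.IsSemisimple ℝ H] (hH : Module.finrank ℝ H = 2 * n - 1) :
    ¬ ∃ ω : L [⋀^Fin 2]→ₗ[ℝ] ℝ, IsCEClosed ω ∧ wpowF ω n ≠ 0 := by
  have : Nontrivial H := Module.nontrivial_of_finrank_pos (R := ℝ) (by omega)
  exact stmt6_general n hdim H
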